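/- If the cumulative cost difference ever reaches zero, the offline optimum is at least the switching cost: if β ≥ 0 and Δ(t₀) = 0 for some t₀ ∈ {1,…,T}, then Opt ≥ β. (Contrapositively, if Opt < β, then Δ(t) < 0 for all t, hence both the schedule of OFA_s and the schedule of gCHASE_s are identically 0 and both incur exactly the optimal cost.) -/

import Mathlib

/-- The cost of a schedule `s` (with states encoded as reals): the operating
cost at time `t` is `(1 - s t) * g0 t + s t * g1 t`, which agrees with
`g_t(s_t)` for binary schedules, plus the switching cost `β·(s t − s (t−1))⁺`. -/
noncomputable def cost (T : ℕ) (β : ℝ) (g0 g1 : ℕ → ℝ) (s : ℕ → ℝ) : ℝ :=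
  ∑ t ∈ Finset.Icc 1 T, ((1 - s t) * g0 t + s t * g1 t + β * max (s t - s (t - 1)) 0)

/-- The cumulative cost difference `Δ(t)`, with `Δ(0) = −β` and
`Δ(t) = min{0, max{−β, Δ(t−1) + (g_t(0) − g_t(1))}}`. -/
noncomputable def Δfun (β : ℝ) (g0 g1 : ℕ → ℝ) : ℕ → ℝ
  | 0 => -β
  | t + 1 => min 0 (max (-β) (Δfun β g0 g1 t + (g0 (t + 1) - g1 (t + 1))))

/-- The offline optimal value `Opt` of problem SP: the infimum of costs over
all binary schedules starting in state `0`. -/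
noncomputable def opt (T : ℕ) (β : ℝ) (g0 g1 : ℕ → ℝ) : ℝ :=
  sInf {c : ℝ | ∃ s : ℕ → ℝ, (∀ t, s t = 0 ∨ s t = 1) ∧ s 0 = 0 ∧ c = cost T β g0 g1 s}

theorem Δfun_ge (β : ℝ) (hβ : 0 ≤ β) (g0 g1 : ℕ → ℝ) (t : ℕ) : -β ≤ Δfun β g0 g1 t := by
  cases t with
  | zero => simp [Δfun]
  | succ t => exact le_min (by linarith) (le_max_left _ _)

theorem cost_succ (T : ℕ) (β : ℝ) (g0 g1 s : ℕ → ℝ) :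
    cost (T + 1) β g0 g1 s = cost T β g0 g1 s +
      ((1 - s (T + 1)) * g0 (T + 1) + s (T + 1) * g1 (T + 1) + β * max (s (T + 1) - s T) 0) := by
  unfold cost
  rw [Finset.sum_Icc_succ_top (by omega)]
  simp

theorem prefix_bound (T : ℕ) (β : ℝ) (hβ : 0 ≤ β) (g0 g1 : ℕ → ℝ)
    (hg0 : ∀ t, 1 ≤ t → t ≤ T → 0 ≤ g0 t) (hg1 : ∀ t, 1 ≤ t → t ≤ T → 0 ≤ g1 t)
    (s : ℕ → ℝ) (hs : ∀ t, s t = 0 ∨ s t = 1) (hs0 : s 0 = 0) (t : ℕ) (ht : t ≤ T) :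
    β + (1 - s t) * Δfun β g0 g1 t ≤ cost t β g0 g1 s := by
  induction t with
  | zero => simp [cost, Δfun, hs0]
  | succ t ih =>
    have ih := ih (by omega)
    have a := hg0 (t + 1) (by omega) ht
    have b := hg1 (t + 1) (by omega) ht
    have c := Δfun_ge β hβ g0 g1 t
    have d : Δfun β g0 g1 (t + 1) ≤ 0 := min_le_left _ _
    have e : Δfun β g0 g1 (t + 1) ≤ Δfun β g0 g1 t + g0 (t + 1) :=
      (min_le_right _ _).trans (max_le (by linarith) (by linarith))
    rw [cost_succ]
    rcases hs t with h | h <;> rcases hs (t + 1) with h' | h' <;>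
      rw [h] at ih <;> rw [h, h'] <;> norm_num <;> linarith

/-- if the cumulative cost difference reaches zero at some
`t₀ ∈ {1,…,T}`, then the offline optimum is at least the switching cost:
`Opt ≥ β`. -/
theorem stmt18 (T : ℕ) (β : ℝ) (hβ : 0 ≤ β) (g0 g1 : ℕ → ℝ)
    (hg0 : ∀ t, 1 ≤ t → t ≤ T → 0 ≤ g0 t) (hg1 : ∀ t, 1 ≤ t → t ≤ T → 0 ≤ g1 t)
    (t₀ : ℕ) (ht₀1 : 1 ≤ t₀) (ht₀T : t₀ ≤ T) (hΔ : Δfun β g0 g1 t₀ = 0) :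
    β ≤ opt T β g0 g1 := by
  have key : ∀ s : ℕ → ℝ, (∀ t, s t = 0 ∨ s t = 1) → s 0 = 0 → β ≤ cost T β g0 g1 s := by
    intro s hs hs0
    have h1 := prefix_bound T β hβ g0 g1 hg0 hg1 s hs hs0 t₀ ht₀T
    rw [hΔ, mul_zero, add_zero] at h1
    refine h1.trans ?_
    unfold cost
    apply Finset.sum_le_sum_of_subset_of_nonneg (Finset.Icc_subset_Icc_right ht₀T)
    intro i hi _
    rw [Finset.mem_Icc] at hi
    have a := hg0 i hi.1 hi.2
    have b := hg1 i hi.1 hi.2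
    have c : 0 ≤ β * max (s i - s (i - 1)) 0 := mul_nonneg hβ (le_max_right _ _)
    rcases hs i with h | h <;> rw [h] at c ⊢ <;> linarith
  apply le_csInf
  · exact ⟨_, fun _ => 0, fun _ => Or.inl rfl, rfl, rfl⟩
  · rintro c ⟨s, hs, hs0, rfl⟩
    exact key s hs hs0
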